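/- arXiv:2605.20841 — 2 statements merged into one kernel-verified Lean document; each statement's English description precedes it below -/
import Mathlib

section
/- Let B₁, B₂ ⊆ ℕ form a 𝒦-pair with B₁ ≤_e Kᶜ and B₂ ≤_e Kᶜ, where K = {e : e ∈ W_e} is the halting set and Kᶜ its complement. Then for every set C ⊆ ℕ with B₂ ≰_e C, one has J_e(B₁ ⊕ C) ≡_e J_e(C). -/
/-!
Let `M` be a c.e. set witnessing that `B₁, B₂` is a `𝒦`-pair. The substantial direction is
`J_e(B₁ ⊕ C) ≤ₑ J_e(C)`. Since `B₁ ≤ₑ Kᶜ ≤ₑ J_e(C)` and `C ≤ₑ J_e(C)`, also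
`K_{B₁ ⊕ C} ≤ₑ J_e(C)`, so only the complement of `K_{B₁ ⊕ C}` needs an argument.

For `y : ℕ` put `M^y = {x | ⟨x, y⟩ ∈ M}`, and let `P` be the set of `⟨e, y⟩` with
`e ∈ K_{M^y ⊕ C}` (`kpairSet`); then `P ≤ₑ C`. If `y ∈ B₂` then `B₁ ⊆ M^y`, and if `y ∉ B₂` then
`M^y ⊆ B₁`. Hence `e ∈ K_{B₁ ⊕ C}` forces `⟨e, y⟩ ∈ P` for all `y ∈ B₂`, whereas for
`e ∉ K_{B₁ ⊕ C}` the section `{y | ⟨e, y⟩ ∈ P}` is contained in `B₂`, properly so because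
`B₂ ≰ₑ C`. So `e ∉ K_{B₁ ⊕ C}` iff `⟨e, y⟩ ∉ P` for some `y ∈ B₂` (`not_mem_kset_oplus_iff`), and
the right side is enumerable from `J_e(C)`: `B₂ ≤ₑ Kᶜ ≤ₑ J_e(C)`, and `Pᶜ ≤ₑ J_e(C)` as `P` is
many-one reducible to `K_C` (`exists_reduction_kset`).

Enumeration reducibility is handled through `PosEnum B p`, a form for predicates on arbitrary
`Primcodable` types, for which closure under `∧`, `∨`, `∃` and bounded `∀` is proved directly;
`enumRed_iff` identifies it with `EnumRed`.
-/

def Dset (u : ℕ) : Set ℕ := {i | Nat.testBit u i}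

def enumOp (W A : Set ℕ) : Set ℕ := {x | ∃ u, Nat.pair x u ∈ W ∧ Dset u ⊆ A}

def CE (W : Set ℕ) : Prop := ∃ f : ℕ →. ℕ, Partrec f ∧ W = f.Dom

def EnumRed (A B : Set ℕ) : Prop := ∃ W, CE W ∧ A = enumOp W B

def EnumEq (A B : Set ℕ) : Prop := EnumRed A B ∧ EnumRed B A

def WeStd (e : ℕ) : Set ℕ := {x | ((Denumerable.ofNat Nat.Partrec.Code e).eval x).Dom}

def PhiStd (e : ℕ) : Set ℕ → Set ℕ := enumOp (WeStd e)

def pgraph (φ : ℕ →. ℕ) : Set ℕ := {n | n.unpair.2 ∈ φ n.unpair.1}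

def peRed (φ ψ : ℕ →. ℕ) : Prop := EnumRed (pgraph φ) (pgraph ψ)

def pfAdd (φ ψ : ℕ →. ℕ) : ℕ →. ℕ := fun n => if n % 2 = 0 then φ (n / 2) else ψ (n / 2)

def pfCons (i : ℕ) (φ : ℕ →. ℕ) : ℕ →. ℕ := fun n => if n = 0 then Part.some i else φ (n - 1)

abbrev MassPb := Set (ℕ →. ℕ)

def mpPlus (A B : MassPb) : MassPb := {h | ∃ φ ∈ A, ∃ ψ ∈ B, h = pfAdd φ ψ}

def mpCons (i : ℕ) (A : MassPb) : MassPb := pfCons i '' A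

def mpWedge (A B : MassPb) : MassPb := mpCons 0 A ∪ mpCons 1 B

def mpArrow (A B : MassPb) : MassPb :=
  {h | ∃ e φ, h = pfCons e φ ∧ ∀ ψ ∈ A, ∃ χ ∈ B, pgraph χ = PhiStd e (pgraph (pfAdd φ ψ))}

def DRed (A B : MassPb) : Prop :=
  ∃ W, CE W ∧ ∀ ψ ∈ B, ∃ χ ∈ A, pgraph χ = enumOp W (pgraph ψ)

def DEq (A B : MassPb) : Prop := DRed A B ∧ DRed B A

def DwRed (A B : MassPb) : Prop := ∀ ψ ∈ B, ∃ φ ∈ A, peRed φ ψ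

def DwEq (A B : MassPb) : Prop := DwRed A B ∧ DwRed B A

def UpClosedE (A : MassPb) : Prop := ∀ φ ψ, φ ∈ A → peRed φ ψ → ψ ∈ A

def DMProblem (A : MassPb) : Prop := A.Nonempty ∧ UpClosedE A

def PartCompFn (φ : ℕ →. ℕ) : Prop := CE (pgraph φ)

def oplus (A B : Set ℕ) : Set ℕ := (fun x => 2*x) '' A ∪ (fun x => 2*x+1) '' B

/-- The halting set `K = {e : e ∈ W_e}`. -/
def Khalt : Set ℕ := {e | e ∈ WeStd e}

/-- `K_X = {e : e ∈ Φ_e(X)}`. -/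
def Kset (X : Set ℕ) : Set ℕ := {e | e ∈ PhiStd e X}

/-- The enumeration jump `J_e(X) = K_X ⊕ (K_X)ᶜ`. -/
def Je (X : Set ℕ) : Set ℕ := oplus (Kset X) (Kset X)ᶜ

/-- `B₁, B₂` form a `𝒦`-pair relative to `C`: some `M ≤ₑ C` contains
`B₁ × B₂` and every pair in `M` has first coordinate in `B₁` or second
coordinate in `B₂`. -/
def KPairRel (B1 B2 C : Set ℕ) : Prop :=
  ∃ M : Set ℕ, EnumRed M C ∧
    (∀ x ∈ B1, ∀ y ∈ B2, Nat.pair x y ∈ M) ∧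
    (∀ p ∈ M, p.unpair.1 ∈ B1 ∨ p.unpair.2 ∈ B2)

/-! ### Predicates enumerable from a set -/

/-- `PosEnum B p`: the predicate `p` is enumeration reducible to `B`. A computable `g` lists, for
each `a`, finite sets (coded as lists) of conditions, and `p a` holds iff `B` meets all the
conditions of one of them. `none` stands for "nothing listed at stage `w`". -/
def PosEnum {α : Type*} [Primcodable α] (B : Set ℕ) (p : α → Prop) : Prop :=
  ∃ g : α → ℕ → Option (List ℕ), Computable₂ g ∧
    ∀ a, p a ↔ ∃ w, ∃ l ∈ g a w, ∀ i ∈ l, i ∈ B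

namespace PosEnum

variable {α β : Type*} [Primcodable α] [Primcodable β] {A B : Set ℕ} {p q : α → Prop}

theorem of_iff (h : PosEnum B p) (H : ∀ a, q a ↔ p a) : PosEnum B q := by
  obtain ⟨g, hg, h⟩ := h
  exact ⟨g, hg, fun a => (H a).trans (h a)⟩

theorem comp {p : β → Prop} (h : PosEnum B p) {f : α → β} (hf : Computable f) :
    PosEnum B fun a => p (f a) := by
  obtain ⟨g, hg, h⟩ := h
  exact ⟨fun a w => g (f a) w, hg.comp (hf.comp Computable.fst) Computable.snd, fun a => h (f a)⟩

theorem mem {f : α → ℕ} (hf : Computable f) : PosEnum B fun a => f a ∈ B :=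
  ⟨fun a _ => some [f a], Computable.option_some.comp
    (Computable.list_cons.comp (hf.comp Computable.fst) (Computable.const [])), fun a => by simp⟩

theorem of_bool {f : α → Bool} (hf : Computable f) : PosEnum B fun a => f a = true :=
  ⟨fun a _ => bif f a then some [] else none,
    Computable.cond (hf.comp Computable.fst) (Computable.const _) (Computable.const _), fun a => by
    cases h : f a <;> simp [h]⟩

theorem of_primrecPred (hp : PrimrecPred p) : PosEnum B p := by
  classical
  exact (of_bool (B := B) hp.decide.to_comp).of_iff fun a => by simp

theorem and (hp : PosEnum B p) (hq : PosEnum B q) : PosEnum B fun a => p a ∧ q a := by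
  obtain ⟨g, hg, hp⟩ := hp
  obtain ⟨k, hk, hq⟩ := hq
  refine ⟨fun a w => (g a w.unpair.1).bind fun l => (k a w.unpair.2).map fun l' => l ++ l',
    ?_, fun a => ?_⟩
  · have u : Computable Nat.unpair := Primrec.unpair.to_comp
    refine Computable.option_bind
      (hg.comp Computable.fst (Computable.fst.comp (u.comp Computable.snd))) ?_
    refine Computable.option_map
      (hk.comp (Computable.fst.comp Computable.fst)
        (Computable.snd.comp (u.comp (Computable.snd.comp Computable.fst)))) ?_
    exact Computable.list_append.comp (Computable.snd.comp Computable.fst) Computable.snd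
  · simp only [hp, hq]
    constructor
    · rintro ⟨⟨w, l, hl, h⟩, w', l', hl', h'⟩
      refine ⟨Nat.pair w w', l ++ l', ?_, ?_⟩
      · simp only [Option.mem_def] at hl hl'
        simp [hl, hl']
      · intro i hi
        rcases List.mem_append.1 hi with hi | hi
        exacts [h i hi, h' i hi]
    · rintro ⟨w, m, hm, h⟩
      simp only [Option.mem_def, Option.bind_eq_some_iff, Option.map_eq_some_iff] at hm
      obtain ⟨l, hl, l', hl', rfl⟩ := hm
      exact ⟨⟨_, l, hl, fun i hi => h i (List.mem_append_left _ hi)⟩,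
        ⟨_, l', hl', fun i hi => h i (List.mem_append_right _ hi)⟩⟩

theorem ex {p : α × β → Prop} (hp : PosEnum B p) : PosEnum B fun a => ∃ b, p (a, b) := by
  obtain ⟨g, hg, hp⟩ := hp
  refine ⟨fun a w => (Encodable.decode (α := β) w.unpair.1).bind fun b => g (a, b) w.unpair.2,
    ?_, fun a => ?_⟩
  · have u : Computable Nat.unpair := Primrec.unpair.to_comp
    refine Computable.option_bind
      (Computable.decode.comp (Computable.fst.comp (u.comp Computable.snd))) ?_
    exact hg.comp (Computable.pair (Computable.fst.comp Computable.fst) Computable.snd)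
      (Computable.snd.comp (u.comp (Computable.snd.comp Computable.fst)))
  · constructor
    · rintro ⟨b, hb⟩
      obtain ⟨w, l, hl, h⟩ := (hp _).1 hb
      exact ⟨Nat.pair (Encodable.encode b) w, l, by simpa using hl, h⟩
    · rintro ⟨w, l, hl, h⟩
      simp only [Option.mem_def, Option.bind_eq_some_iff] at hl
      obtain ⟨b, -, hb⟩ := hl
      exact ⟨b, (hp _).2 ⟨_, l, hb, h⟩⟩

theorem or (hp : PosEnum B p) (hq : PosEnum B q) : PosEnum B fun a => p a ∨ q a := by
  obtain ⟨g, hg, hp⟩ := hp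
  obtain ⟨k, hk, hq⟩ := hq
  have : PosEnum B fun x : α × Bool => if x.2 = true then p x.1 else q x.1 := by
    refine ⟨fun x w => bif x.2 then g x.1 w else k x.1 w,
      Computable.cond (Computable.snd.comp Computable.fst)
        (hg.comp (Computable.fst.comp Computable.fst) Computable.snd)
        (hk.comp (Computable.fst.comp Computable.fst) Computable.snd), ?_⟩
    rintro ⟨a, b⟩
    cases b
    · simpa using hq a
    · simpa using hp a
  exact this.ex.of_iff fun a => by simp [or_comm]

/-- Bounded universal quantification: the witness is the list of the witnesses below the bound. -/
theorem forall_lt {p : α × ℕ → Prop} (hp : PosEnum B p) {f : α → ℕ} (hf : Computable f) :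
    PosEnum B fun a => ∀ i < f a, p (a, i) := by
  obtain ⟨g, hg, hp⟩ := hp
  let G : α × List ℕ → ℕ → Option (List ℕ) := fun x n =>
    Nat.rec (some []) (fun i acc => acc.bind fun l =>
      (g (x.1, i) (x.2.getD i 0)).map fun l' => l ++ l') n
  have hstep : ∀ x n l, l ∈ G x (n + 1) ↔
      ∃ l₁ ∈ G x n, ∃ l₂ ∈ g (x.1, n) (x.2.getD n 0), l₁ ++ l₂ = l := by
    intro x n l
    simp [G, Option.bind_eq_some_iff]
  have hGc : Computable fun x : α × List ℕ => G x (f x.1) := by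
    -- The step function, on `((x, (i, acc)), l)`.
    have h1 : Computable fun y : ((α × List ℕ) × ℕ × Option (List ℕ)) × List ℕ =>
        g (y.1.1.1, y.1.2.1) (y.1.1.2.getD y.1.2.1 0) :=
      hg.comp (Computable.pair (Computable.fst.comp (Computable.fst.comp Computable.fst))
          (Computable.fst.comp (Computable.snd.comp Computable.fst)))
        (Computable₂.comp (f := fun (l : List ℕ) (n : ℕ) => l.getD n 0)
          (Primrec.list_getD (0 : ℕ)).to_comp
          (Computable.snd.comp (Computable.fst.comp Computable.fst))
          (Computable.fst.comp (Computable.snd.comp Computable.fst)))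
    have h2 : Computable fun y : ((α × List ℕ) × ℕ × Option (List ℕ)) × List ℕ =>
        (g (y.1.1.1, y.1.2.1) (y.1.1.2.getD y.1.2.1 0)).map fun l' => y.2 ++ l' :=
      Computable.option_map h1
        (Computable.list_append.comp (Computable.snd.comp Computable.fst) Computable.snd)
    have h3 : Computable₂ fun (x : α × List ℕ) (y : ℕ × Option (List ℕ)) => y.2.bind fun l =>
        (g (x.1, y.1) (x.2.getD y.1 0)).map fun l' => l ++ l' :=
      Computable.option_bind (Computable.snd.comp Computable.snd) h2
    exact Computable.nat_rec (hf.comp Computable.fst) (Computable.const _) h3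
  have hsound : ∀ x n, (∃ l ∈ G x n, ∀ i ∈ l, i ∈ B) ↔
      ∀ i < n, ∃ l ∈ g (x.1, i) (x.2.getD i 0), ∀ j ∈ l, j ∈ B := by
    intro x n
    induction n with
    | zero => simp [G]
    | succ n ih =>
      constructor
      · rintro ⟨l, hl, h⟩ i hi
        obtain ⟨l₁, h₁, l₂, h₂, rfl⟩ := (hstep _ _ _).1 hl
        rcases Nat.lt_succ_iff_lt_or_eq.1 hi with hi | rfl
        · exact ih.1 ⟨l₁, h₁, fun j hj => h j (List.mem_append_left _ hj)⟩ i hi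
        · exact ⟨l₂, h₂, fun j hj => h j (List.mem_append_right _ hj)⟩
      · intro h
        obtain ⟨l₁, h₁, h₁'⟩ := ih.2 fun i hi => h i (hi.trans n.lt_succ_self)
        obtain ⟨l₂, h₂, h₂'⟩ := h n n.lt_succ_self
        refine ⟨l₁ ++ l₂, (hstep _ _ _).2 ⟨l₁, h₁, l₂, h₂, rfl⟩, fun j hj => ?_⟩
        rcases List.mem_append.1 hj with hj | hj
        exacts [h₁' j hj, h₂' j hj]
  have key : PosEnum B fun x : α × List ℕ => ∃ l ∈ G x (f x.1), ∀ i ∈ l, i ∈ B :=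
    ⟨fun x _ => G x (f x.1), hGc.comp Computable.fst, fun x => by simp⟩
  refine key.ex.of_iff fun a => ?_
  simp only [hsound, hp]
  constructor
  · intro h
    choose! w l hl h using h
    refine ⟨(List.range (f a)).map w, fun i hi => ⟨l i, ?_, h i hi⟩⟩
    simpa [List.getD, hi] using hl i hi
  · rintro ⟨ws, h⟩ i hi
    exact ⟨_, h i hi⟩

theorem forall_mem {p : α × ℕ → Prop} (hp : PosEnum B p) {f : α → List ℕ} (hf : Computable f) :
    PosEnum B fun a => ∀ i ∈ f a, p (a, i) := by
  have h1 : PosEnum B fun x : (α × ℕ) × ℕ => (f x.1.1)[x.1.2]? = some x.2 := by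
    refine (of_primrecPred (p := fun y : Option ℕ × Option ℕ => y.1 = y.2)
      Primrec.eq).comp (f := fun x : (α × ℕ) × ℕ => ((f x.1.1)[x.1.2]?, some x.2)) ?_
    exact Computable.pair (Computable.list_getElem?.comp
      (hf.comp (Computable.fst.comp Computable.fst)) (Computable.snd.comp Computable.fst))
      (Computable.option_some.comp Computable.snd)
  have h2 : PosEnum B fun x : (α × ℕ) × ℕ => p (x.1.1, x.2) :=
    hp.comp (Computable.pair (Computable.fst.comp Computable.fst) Computable.snd)
  refine ((h1.and h2).ex.forall_lt (Computable.list_length.comp hf)).of_iff fun a => ?_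
  constructor
  · intro h i hi
    exact ⟨(f a)[i], by simp [hi], h _ (List.getElem_mem hi)⟩
  · intro h j hj
    obtain ⟨i, hi, rfl⟩ := List.mem_iff_getElem.1 hj
    obtain ⟨k, hk, hpk⟩ := h i hi
    simp only [List.getElem?_eq_getElem hi, Option.some.injEq] at hk
    rwa [hk]

/-- Given a computable `g`, "`P` meets some list of conditions of `g` for `a`" is enumeration
reducible to `B` as soon as `P` is. -/
theorem ex_condition {g : α → ℕ → Option (List ℕ)} (hg : Computable₂ g) {P : α × ℕ → Prop}
    (hP : PosEnum B P) : PosEnum B fun a => ∃ w, ∃ l ∈ g a w, ∀ i ∈ l, P (a, i) := by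
  have h1 : PosEnum B fun x : (α × ℕ) × List ℕ => g x.1.1 x.1.2 = some x.2 := by
    refine (of_primrecPred (p := fun y : Option (List ℕ) × Option (List ℕ) => y.1 = y.2)
      Primrec.eq).comp (f := fun x : (α × ℕ) × List ℕ => (g x.1.1 x.1.2, some x.2)) ?_
    exact Computable.pair (hg.comp
      (Computable.fst.comp Computable.fst) (Computable.snd.comp Computable.fst))
      (Computable.option_some.comp Computable.snd)
  have h2 : PosEnum B fun x : (α × ℕ) × List ℕ => ∀ i ∈ x.2, P (x.1.1, i) :=
    (hP.comp (f := fun y : ((α × ℕ) × List ℕ) × ℕ => (y.1.1.1, y.2))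
      (Computable.pair (Computable.fst.comp (Computable.fst.comp Computable.fst))
        Computable.snd)).forall_mem Computable.snd
  exact (h1.and h2).ex.ex

theorem trans (hp : PosEnum A p) (hA : PosEnum B (· ∈ A)) : PosEnum B p := by
  obtain ⟨g, hg, hp⟩ := hp
  exact (ex_condition hg (hA.comp Computable.snd)).of_iff hp

end PosEnum

/-! ### Comparison with `EnumRed` -/

theorem primrec_testBit : PrimrecPred fun x : ℕ × ℕ => x.1.testBit x.2 = true := by
  have hpow : Primrec fun n : ℕ => 2 ^ n :=
    (Primrec.nat_rec₁ 1 (f := fun _ y => 2 * y)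
      (Primrec.nat_mul.comp (Primrec.const 2) Primrec.snd).to₂).of_eq fun n => by
        induction n with
        | zero => rfl
        | succ n ih => simp only [ih]; ring
  refine PrimrecPred.of_eq (p := fun x : ℕ × ℕ => x.1 / 2 ^ x.2 % 2 = 1) ?_ fun x => by
    simp [Nat.testBit_eq_decide_div_mod_eq]
  exact Primrec.eq.comp (Primrec.nat_mod.comp
    (Primrec.nat_div.comp Primrec.fst (hpow.comp Primrec.snd)) (Primrec.const 2)) (Primrec.const 1)

theorem exists_dset (s : Finset ℕ) : ∃ u, ∀ i, i ∈ Dset u ↔ i ∈ s := by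
  refine ⟨∑ i ∈ s, 2 ^ i, fun i => ?_⟩
  simp only [Dset, Set.mem_ofPred_eq]
  rw [← Nat.mem_bitIndices, ← List.mem_toFinset, Finset.toFinset_bitIndices_sum_two_pow]

/-- The relation `n ∈ W_e` is c.e., hence enumerable from every set. -/
theorem posEnum_weStd (B : Set ℕ) : PosEnum B fun x : ℕ × ℕ => x.2 ∈ WeStd x.1 := by
  refine ⟨fun x w => (Nat.Partrec.Code.evaln w (Denumerable.ofNat Nat.Partrec.Code x.1) x.2).map
    fun _ => [], ?_, fun x => ?_⟩
  · refine Computable.option_map (Nat.Partrec.Code.primrec_evaln.to_comp.comp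
      (Computable.pair (Computable.pair Computable.snd
        ((Computable.ofNat _).comp (Computable.fst.comp Computable.fst)))
        (Computable.snd.comp Computable.fst))) (Computable.const _)
  · simp only [WeStd, Set.mem_ofPred_eq, Part.dom_iff_mem, Nat.Partrec.Code.evaln_complete]
    constructor
    · rintro ⟨y, k, h⟩
      exact ⟨k, [], by simpa using ⟨y, h⟩, by simp⟩
    · rintro ⟨k, l, hl, -⟩
      simp only [Option.mem_def, Option.map_eq_some_iff] at hl
      obtain ⟨y, hy, -⟩ := hl
      exact ⟨y, k, hy⟩

theorem CE.exists_index {W : Set ℕ} (h : CE W) : ∃ e, W = WeStd e := by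
  obtain ⟨f, hf, rfl⟩ := h
  obtain ⟨c, hc⟩ := Nat.Partrec.Code.exists_code.1 (Partrec.nat_iff.1 hf)
  refine ⟨Encodable.encode c, ?_⟩
  ext x
  simp [WeStd, hc, PFun.mem_dom, Part.dom_iff_mem]

theorem CE.posEnum {W : Set ℕ} (h : CE W) (B : Set ℕ) : PosEnum B (· ∈ W) := by
  obtain ⟨e, rfl⟩ := h.exists_index
  exact (posEnum_weStd B).comp (Computable.pair (Computable.const e) Computable.id)

theorem CE.of_posEnum {W : Set ℕ} (h : PosEnum ∅ (· ∈ W)) : CE W := by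
  obtain ⟨g, hg, h⟩ := h
  -- A list of conditions met by the empty set is an empty list.
  have hk : Computable₂ fun a w => (g a w).bind fun l =>
      bif l.length == 0 then some 0 else none := by
    refine Computable.option_bind hg ?_
    refine Computable.cond ?_ (Computable.const _) (Computable.const _)
    exact Primrec.beq.to_comp.comp (Computable.list_length.comp Computable.snd)
      (Computable.const 0)
  refine ⟨_, Partrec.rfindOpt hk, ?_⟩
  ext a
  refine (h a).trans (Iff.trans ?_ (Nat.rfindOpt_dom (α := ℕ)).symm)
  refine exists_congr fun w => ?_
  rcases g a w with _ | _ | ⟨x, l⟩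
  · simp
  · simp
  · simpa using ⟨x, fun hx => (hx rfl).elim⟩

theorem posEnum_dset_subset {B : Set ℕ} {p : ℕ × ℕ → Prop} (hp : PosEnum B p) :
    PosEnum B fun x : ℕ × ℕ => ∀ i ∈ Dset x.2, p (x.1, i) := by
  have h : PosEnum B fun y : (ℕ × ℕ) × ℕ => ¬ (y.1.2.testBit y.2 = true) ∨ p (y.1.1, y.2) :=
    (PosEnum.of_primrecPred ((primrec_testBit.comp
      (Primrec.pair (Primrec.snd.comp Primrec.fst) Primrec.snd)).not)).or
      (hp.comp (Computable.pair (Computable.fst.comp Computable.fst) Computable.snd))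
  refine (h.forall_lt (f := fun x : ℕ × ℕ => x.2) Computable.snd).of_iff fun x => ?_
  constructor
  · intro H i _
    by_cases hi : x.2.testBit i = true
    · exact Or.inr (H i hi)
    · exact Or.inl hi
  · intro H i hi
    have hlt : i < x.2 := Nat.lt_two_pow_self.trans_le (Nat.ge_two_pow_of_testBit hi)
    exact (H i hlt).resolve_left fun hn => hn hi

theorem enumRed_iff {A B : Set ℕ} : EnumRed A B ↔ PosEnum B (· ∈ A) := by
  constructor
  · rintro ⟨W, hW, rfl⟩
    have h1 : PosEnum B fun x : ℕ × ℕ => Nat.pair x.1 x.2 ∈ W :=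
      (hW.posEnum B).comp Primrec₂.natPair.to_comp
    have h2 : PosEnum B fun x : ℕ × ℕ => ∀ i ∈ Dset x.2, i ∈ B :=
      posEnum_dset_subset (p := fun x => x.2 ∈ B) (PosEnum.mem Computable.snd)
    exact (h1.and h2).ex
  · rintro ⟨g, hg, h⟩
    refine ⟨{n | ∃ w, ∃ l ∈ g n.unpair.1 w, ∀ i ∈ l, n.unpair.2.testBit i = true},
      CE.of_posEnum ?_, ?_⟩
    · have u : Computable Nat.unpair := Primrec.unpair.to_comp
      exact PosEnum.ex_condition (α := ℕ) (g := fun n w => g n.unpair.1 w)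
        (P := fun x => x.1.unpair.2.testBit x.2 = true)
        (hg.comp (Computable.fst.comp (u.comp Computable.fst)) Computable.snd)
        ((PosEnum.of_primrecPred primrec_testBit).comp
          (Computable.pair (Computable.snd.comp (u.comp Computable.fst)) Computable.snd))
    · ext x
      refine (h x).trans ?_
      simp only [enumOp, Set.mem_ofPred_eq, Nat.unpair_pair]
      constructor
      · rintro ⟨w, l, hl, hB⟩
        obtain ⟨u, hu⟩ := exists_dset l.toFinset
        exact ⟨u, ⟨w, l, hl, fun i hi => (hu i).2 (by simpa using hi)⟩,
          fun i hi => hB i (by simpa using (hu i).1 hi)⟩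
      · rintro ⟨u, ⟨w, l, hl, hu⟩, hB⟩
        exact ⟨w, l, hl, fun i hi => hB (hu i hi)⟩

/-! ### The enumeration jump -/

theorem mem_oplus_even {A B : Set ℕ} {x : ℕ} : 2 * x ∈ oplus A B ↔ x ∈ A := by
  simp only [oplus, Set.mem_union, Set.mem_image]
  constructor
  · rintro (⟨y, hy, h⟩ | ⟨y, _, h⟩)
    · obtain rfl : y = x := by omega
      exact hy
    · omega
  · exact fun h => Or.inl ⟨x, h, rfl⟩

theorem mem_oplus_odd {A B : Set ℕ} {x : ℕ} : 2 * x + 1 ∈ oplus A B ↔ x ∈ B := by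
  simp only [oplus, Set.mem_union, Set.mem_image]
  constructor
  · rintro (⟨y, _, h⟩ | ⟨y, hy, h⟩)
    · omega
    · obtain rfl : y = x := by omega
      exact hy
  · exact fun h => Or.inr ⟨x, h, rfl⟩

theorem computable_two_mul : Computable fun x : ℕ => 2 * x :=
  (Primrec.nat_mul.comp (Primrec.const 2) Primrec.id).to_comp

theorem computable_two_mul_add_one : Computable fun x : ℕ => 2 * x + 1 :=
  Computable.succ.comp computable_two_mul

theorem PosEnum.oplus {A A' B : Set ℕ} (h : PosEnum B (· ∈ A)) (h' : PosEnum B (· ∈ A')) :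
    PosEnum B (· ∈ oplus A A') := by
  have e : PosEnum B fun x : ℕ × ℕ => x.2 ∈ A ∧ 2 * x.2 = x.1 :=
    (h.comp Computable.snd).and (PosEnum.of_primrecPred
      (Primrec.eq.comp (Primrec.nat_mul.comp (Primrec.const 2) Primrec.snd) Primrec.fst))
  have o : PosEnum B fun x : ℕ × ℕ => x.2 ∈ A' ∧ 2 * x.2 + 1 = x.1 :=
    (h'.comp Computable.snd).and (PosEnum.of_primrecPred
      (Primrec.eq.comp (Primrec.succ.comp
        (Primrec.nat_mul.comp (Primrec.const 2) Primrec.snd)) Primrec.fst))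
  exact e.ex.or o.ex

/-- `K_X ≤ₑ X`. -/
theorem posEnum_kset (X : Set ℕ) : PosEnum X (· ∈ Kset X) := by
  have h1 : PosEnum X fun x : ℕ × ℕ => Nat.pair x.1 x.2 ∈ WeStd x.1 :=
    (posEnum_weStd X).comp (Computable.pair Computable.fst Primrec₂.natPair.to_comp)
  have h2 : PosEnum X fun x : ℕ × ℕ => ∀ i ∈ Dset x.2, i ∈ X :=
    posEnum_dset_subset (p := fun x => x.2 ∈ X) (PosEnum.mem Computable.snd)
  exact (h1.and h2).ex

/-- `K_X` is complete: every predicate enumerable from `X` is many-one reducible to `K_X`. The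
reduction sends `x` to an index of an operator that enumerates all of `ℕ` from `X` if `p x` holds
and nothing otherwise. -/
theorem exists_reduction_kset {X : Set ℕ} {p : ℕ → Prop} (h : PosEnum X p) :
    ∃ f : ℕ → ℕ, Computable f ∧ ∀ x, p x ↔ f x ∈ Kset X := by
  obtain ⟨W, ⟨φ, hφ, rfl⟩, hW⟩ := (enumRed_iff (A := {x | p x})).2 h
  have u : Computable Nat.unpair := Primrec.unpair.to_comp
  have hψ : Partrec fun n : ℕ => φ (Nat.pair n.unpair.1 n.unpair.2.unpair.2) :=
    hφ.comp (Primrec₂.natPair.to_comp.comp (Computable.fst.comp u)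
      (Computable.snd.comp (u.comp (Computable.snd.comp u))))
  obtain ⟨c, hc⟩ := Nat.Partrec.Code.exists_code.1 (Partrec.nat_iff.1 hψ)
  refine ⟨fun x => Encodable.encode (c.curry x), Computable.encode.comp
    (Nat.Partrec.Code.primrec₂_curry.to_comp.comp (Computable.const c) Computable.id),
    fun x => ?_⟩
  have : p x ↔ x ∈ enumOp φ.Dom X := by rw [← hW]; rfl
  rw [this]
  simp [Kset, PhiStd, enumOp, WeStd, Nat.Partrec.Code.eval_curry, hc, PFun.mem_dom,
    Part.dom_iff_mem]

theorem PosEnum.jump {X : Set ℕ} {p : ℕ → Prop} (h : PosEnum X p) : PosEnum (Je X) p := by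
  obtain ⟨f, hf, H⟩ := exists_reduction_kset h
  exact (PosEnum.mem (computable_two_mul.comp hf)).of_iff fun x =>
    (H x).trans mem_oplus_even.symm

theorem PosEnum.jump_not {X : Set ℕ} {p : ℕ → Prop} (h : PosEnum X p) :
    PosEnum (Je X) fun x => ¬ p x := by
  obtain ⟨f, hf, H⟩ := exists_reduction_kset h
  exact (PosEnum.mem (computable_two_mul_add_one.comp hf)).of_iff fun x =>
    (not_congr (H x)).trans (mem_oplus_odd (B := (Kset X)ᶜ)).symm

theorem je_le_of {X Y : Set ℕ} (h : PosEnum Y (· ∈ Kset X)) (h' : PosEnum Y (· ∉ Kset X)) :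
    EnumRed (Je X) Y :=
  enumRed_iff.2 (h.oplus h')

theorem je_mono {X Y : Set ℕ} (h : PosEnum Y (· ∈ X)) : EnumRed (Je X) (Je Y) :=
  je_le_of ((posEnum_kset X).trans h).jump ((posEnum_kset X).trans h).jump_not

/-- Sets enumerable from `Kᶜ` are enumerable from every jump. -/
theorem posEnum_je_of_khalt {B : Set ℕ} (h : EnumRed B Khaltᶜ) (X : Set ℕ) :
    PosEnum (Je X) (· ∈ B) :=
  (enumRed_iff.1 h).trans
    (((posEnum_weStd X).comp (Computable.pair Computable.id Computable.id)).jump_not)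

/-! ### `𝒦`-pairs -/

/-- The pairs `⟨e, y⟩` such that `Φ_e(X ⊕ C)` enumerates `e` for `X = {x | ⟨x, y⟩ ∈ M}`. -/
def kpairSet (M C : Set ℕ) : Set ℕ :=
  {n | n.unpair.1 ∈ Kset (oplus {x | Nat.pair x n.unpair.2 ∈ M} C)}

theorem kset_mono {X Y : Set ℕ} (h : X ⊆ Y) : Kset X ⊆ Kset Y :=
  fun _ ⟨u, hu, hX⟩ => ⟨u, hu, hX.trans h⟩

theorem oplus_mono {A A' B : Set ℕ} (h : A ⊆ A') : oplus A B ⊆ oplus A' B :=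
  Set.union_subset_union_left _ (Set.image_mono h)

theorem posEnum_kpairSet {M C : Set ℕ} (hM : PosEnum C (· ∈ M)) :
    PosEnum C (· ∈ kpairSet M C) := by
  have u : Computable Nat.unpair := Primrec.unpair.to_comp
  have h1 : PosEnum C fun x : ℕ × ℕ =>
      Nat.pair x.1.unpair.1 x.2 ∈ WeStd x.1.unpair.1 :=
    (posEnum_weStd C).comp (f := fun x : ℕ × ℕ => (x.1.unpair.1, Nat.pair x.1.unpair.1 x.2))
      (Computable.pair (Computable.fst.comp (u.comp Computable.fst))
        (Primrec₂.natPair.to_comp.comp (Computable.fst.comp (u.comp Computable.fst))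
          Computable.snd))
  have e : PosEnum C fun x : (ℕ × ℕ) × ℕ =>
      Nat.pair x.2 x.1.1.unpair.2 ∈ M ∧ 2 * x.2 = x.1.2 :=
    (hM.comp (Primrec₂.natPair.to_comp.comp Computable.snd
      (Computable.snd.comp (u.comp (Computable.fst.comp Computable.fst))))).and
    (PosEnum.of_primrecPred (Primrec.eq.comp
      (Primrec.nat_mul.comp (Primrec.const 2) Primrec.snd) (Primrec.snd.comp Primrec.fst)))
  have o : PosEnum C fun x : (ℕ × ℕ) × ℕ => x.2 ∈ C ∧ 2 * x.2 + 1 = x.1.2 :=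
    (PosEnum.mem Computable.snd).and (PosEnum.of_primrecPred (Primrec.eq.comp
      (Primrec.succ.comp (Primrec.nat_mul.comp (Primrec.const 2) Primrec.snd))
      (Primrec.snd.comp Primrec.fst)))
  have h2 : PosEnum C fun x : ℕ × ℕ => ∀ i ∈ Dset x.2,
      i ∈ oplus {z | Nat.pair z x.1.unpair.2 ∈ M} C :=
    posEnum_dset_subset
      (p := fun x : ℕ × ℕ => x.2 ∈ oplus {z | Nat.pair z x.1.unpair.2 ∈ M} C) (e.ex.or o.ex)
  exact (h1.and h2).ex

/-- The step where the `𝒦`-pair is used. If `e ∈ K_{B₁ ⊕ C}`, then every `y ∈ B₂` satisfies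
`⟨e, y⟩ ∈ kpairSet M C`. Otherwise `{y | ⟨e, y⟩ ∈ kpairSet M C}` is a subset of `B₂`, and it is
proper because it is enumerable from `C` and `B₂` is not. -/
theorem not_mem_kset_oplus_iff {B1 B2 M C : Set ℕ} (hM : PosEnum C (· ∈ M))
    (hB : ∀ x ∈ B1, ∀ y ∈ B2, Nat.pair x y ∈ M)
    (hB' : ∀ p ∈ M, p.unpair.1 ∈ B1 ∨ p.unpair.2 ∈ B2) (hC : ¬ EnumRed B2 C) (e : ℕ) :
    e ∉ Kset (oplus B1 C) ↔ ∃ y, y ∈ B2 ∧ Nat.pair e y ∉ kpairSet M C := by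
  constructor
  · intro he
    by_contra! hcon
    refine hC (enumRed_iff.2 (((posEnum_kpairSet hM).comp
      (Primrec₂.natPair.to_comp.comp (Computable.const e) Computable.id)).of_iff fun y =>
        ⟨hcon y, fun hy => ?_⟩))
    by_contra hyB
    refine he (kset_mono (oplus_mono fun x hx => ?_)
      (by simpa only [kpairSet, Set.mem_ofPred_eq, Nat.unpair_pair] using! hy))
    have := hB' _ hx
    simp only [Nat.unpair_pair] at this
    exact this.resolve_right hyB
  · rintro ⟨y, hy, hn⟩ he
    refine hn ?_
    simp only [kpairSet, Set.mem_ofPred_eq, Nat.unpair_pair]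
    exact kset_mono (oplus_mono fun x hx => hB x hx y hy) he

/-- If `B₁, B₂` form a `𝒦`-pair with `B₁, B₂ ≤ₑ Kᶜ`, then for every `C` with
`B₂ ≰ₑ C` one has `J_e(B₁ ⊕ C) ≡ₑ J_e(C)`. -/
theorem kpair_jump_preservation (B1 B2 : Set ℕ)
    (hK : KPairRel B1 B2 ∅)
    (h1 : EnumRed B1 Khaltᶜ) (h2 : EnumRed B2 Khaltᶜ) :
    ∀ C : Set ℕ, ¬ EnumRed B2 C → EnumEq (Je (oplus B1 C)) (Je C) := by
  intro C hC
  obtain ⟨M, hM, hB, hB'⟩ := hK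
  have hMC : PosEnum C (· ∈ M) :=
    (enumRed_iff.1 hM).trans ((PosEnum.of_bool (Computable.const false)).of_iff fun a => by simp)
  refine ⟨je_le_of ?_ ?_, je_mono ?_⟩
  · exact (posEnum_kset _).trans
      ((posEnum_je_of_khalt h1 C).oplus (PosEnum.mem Computable.id).jump)
  · have h : PosEnum (Je C) fun x : ℕ × ℕ => x.2 ∈ B2 ∧ Nat.pair x.1 x.2 ∉ kpairSet M C :=
      ((posEnum_je_of_khalt h2 C).comp Computable.snd).and
        ((posEnum_kpairSet hMC).jump_not.comp Primrec₂.natPair.to_comp)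
    exact h.ex.of_iff (not_mem_kset_oplus_iff hMC hB hB' hC)
  · exact (PosEnum.mem computable_two_mul_add_one).of_iff fun x => mem_oplus_odd.symm
end

section
/- Let 𝒬ℳ be the class of all subsets of ℕ that are either computably enumerable, or quasi-minimal and ≤_e J_e(∅). Then 𝒬ℳ is not a splitting class: there exist non-c.e. sets B₁, B₂ ∈ 𝒬ℳ such that there is no C ∈ 𝒬ℳ with both B₁ ⊕ C ∉ 𝒬ℳ and B₂ ⊕ C ∉ 𝒬ℳ; in particular the splitting condition fails for A = ∅ and 𝓑 = {B₁, B₂}. -/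
/-- A collection of subsets of `ℕ` is downwards `≤ₑ`-closed. -/
def DownClosedE (I : Set (Set ℕ)) : Prop := ∀ X Y : Set ℕ, EnumRed X Y → Y ∈ I → X ∈ I

/-- A splitting class of sets under enumeration reducibility. -/
def SplittingClassE (I : Set (Set ℕ)) : Prop :=
  I.Countable ∧ DownClosedE I ∧
  ∀ A ∈ I, ∀ Bs : Set (Set ℕ), Bs.Finite → Bs ⊆ I → (∀ B ∈ Bs, ¬ EnumRed B A) →
    ∃ C ∈ I, EnumRed A C ∧ ¬ EnumRed C A ∧ ∀ B ∈ Bs, oplus B C ∉ I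

/-- The graph of a total function, as a set of codes of pairs. -/
def tgraph (f : ℕ → ℕ) : Set ℕ := {n | f n.unpair.1 = n.unpair.2}

/-- `X` is quasi-minimal: not c.e., and every total function enumeration
reducible to `X` is computable. -/
def QuasiMinimal (X : Set ℕ) : Prop :=
  ¬ CE X ∧ ∀ f : ℕ → ℕ, EnumRed (tgraph f) X → Computable f

/-- The class of sets that are either c.e., or quasi-minimal and `≤ₑ J_e(∅)`. -/
def QMclass : Set (Set ℕ) := {X | CE X ∨ (QuasiMinimal X ∧ EnumRed X (Je ∅))}

open Set

/-! ### Closure properties of r.e. predicates -/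

section RE

variable {α β : Type*} [Primcodable α] [Primcodable β]

theorem re_comp {p : β → Prop} (hp : REPred p) {f : α → β} (hf : Computable f) :
    REPred fun a => p (f a) :=
  Partrec.comp hp hf

theorem re_and {p q : α → Prop} (hp : REPred p) (hq : REPred q) : REPred fun a => p a ∧ q a := by
  have h : Partrec fun a => (Part.assert (p a) fun _ => Part.some ()).bind
      fun _ => Part.assert (q a) fun _ => Part.some () :=
    Partrec.bind hp (Partrec.comp hq Computable.fst)
  refine h.dom_re.of_eq fun a => ?_
  simp [Part.assert]

theorem re_or {p q : α → Prop} (hp : REPred p) (hq : REPred q) : REPred fun a => p a ∨ q a := by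
  obtain ⟨k, hk, h⟩ := Partrec.merge' hp hq
  refine hk.dom_re.of_eq fun a => ?_
  rw [(h a).2]
  simp [Part.assert]

/-- Kleene normal form: an r.e. predicate is the projection of a primitive recursive one that is
monotone in the stage. Monotonicity is what makes bounded universal quantifiers commute with the
search for a stage. -/
theorem re_normal_form {p : α → Prop} (hp : REPred p) :
    ∃ S : α × ℕ → Prop, PrimrecPred S ∧ (∀ a s t, s ≤ t → S (a, s) → S (a, t)) ∧
      ∀ a, p a ↔ ∃ s, S (a, s) := by
  obtain ⟨c, hc⟩ := Nat.Partrec.Code.exists_code.1 hp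
  refine ⟨fun x => (Nat.Partrec.Code.evaln x.2 c (Encodable.encode x.1)).isSome = true, ?_, ?_, ?_⟩
  · exact Primrec.eq.comp (Primrec.option_isSome.comp (Nat.Partrec.Code.primrec_evaln.comp
      ((Primrec.snd.pair (Primrec.const c)).pair (Primrec.encode.comp Primrec.fst))))
      (Primrec.const true)
  · intro a s t hst h
    simp only [Option.isSome_iff_exists] at h ⊢
    obtain ⟨x, hx⟩ := h
    exact ⟨x, Nat.Partrec.Code.evaln_mono hst hx⟩
  · intro a
    have h1 : p a ↔ ∃ x, x ∈ c.eval (Encodable.encode a) := by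
      rw [hc]
      simp [Part.assert]
    rw [h1]
    simp only [Option.isSome_iff_exists, Nat.Partrec.Code.evaln_complete]
    exact exists_comm

theorem re_of_stage {S : α × ℕ → Prop} (hS : PrimrecPred S) : REPred fun a => ∃ s, S (a, s) := by
  classical
  have h : Partrec fun a => Nat.rfind fun n => Part.some (decide (S (a, n))) :=
    Partrec.rfind (hS.decide.to_comp.partrec)
  refine h.dom_re.of_eq fun a => ?_
  refine Nat.rfind_dom.trans ?_
  simp

theorem re_ex {p : α × ℕ → Prop} (hp : REPred p) : REPred fun a => ∃ n, p (a, n) := by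
  obtain ⟨S, hS, -, h⟩ := re_normal_form hp
  have h2 : PrimrecPred fun x : α × ℕ => S ((x.1, x.2.unpair.1), x.2.unpair.2) :=
    hS.comp ((Primrec.fst.pair (Primrec.fst.comp (Primrec.unpair.comp Primrec.snd))).pair
      (Primrec.snd.comp (Primrec.unpair.comp Primrec.snd)))
  refine (re_of_stage h2).of_eq fun a => ?_
  constructor
  · rintro ⟨s, hs⟩
    exact ⟨_, (h _).2 ⟨_, hs⟩⟩
  · rintro ⟨n, hn⟩
    obtain ⟨s, hs⟩ := (h _).1 hn
    exact ⟨Nat.pair n s, by simpa using hs⟩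

theorem re_ball {p : α × ℕ → Prop} (hp : REPred p) :
    REPred fun x : α × ℕ => ∀ i < x.2, p (x.1, i) := by
  obtain ⟨S, hS, hm, h⟩ := re_normal_form hp
  have h1 : PrimrecRel fun (i : ℕ) (y : (α × ℕ) × ℕ) => S ((y.1.1, i), y.2) :=
    hS.comp (((Primrec.fst.comp (Primrec.fst.comp Primrec.snd)).pair Primrec.fst).pair
      (Primrec.snd.comp Primrec.snd))
  have h2 : PrimrecPred fun y : (α × ℕ) × ℕ => ∀ i ∈ List.range y.1.2, S ((y.1.1, i), y.2) :=
    h1.forall_mem_list.comp (Primrec.list_range.comp (Primrec.snd.comp Primrec.fst)) Primrec.id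
  refine (re_of_stage h2).of_eq ?_
  rintro ⟨a, n⟩
  simp only [List.mem_range, h]
  constructor
  · rintro ⟨s, hs⟩ i hi
    exact ⟨s, hs i hi⟩
  · intro H
    choose! g hg using H
    refine ⟨(Finset.range n).sup g, fun i hi => hm _ _ _ ?_ (hg i hi)⟩
    exact Finset.le_sup (f := g) (Finset.mem_range.2 hi)

theorem ce_iff_re {W : Set ℕ} : CE W ↔ REPred fun n => n ∈ W := by
  constructor
  · rintro ⟨f, hf, rfl⟩
    exact hf.dom_re
  · intro h
    refine ⟨_, Partrec.map h (Computable.const 0).to₂, ?_⟩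
    ext n
    simp [PFun.Dom, Part.assert]

theorem primrec_testBit_s17 : PrimrecRel fun u i : ℕ => u.testBit i = true := by
  have hpow : Primrec₂ fun m n : ℕ => m ^ n := Primrec₂.unpaired'.1 Nat.Primrec.pow
  have : PrimrecPred fun x : ℕ × ℕ => x.1 / 2 ^ x.2 % 2 = 1 :=
    Primrec.eq.comp (Primrec.nat_mod.comp (Primrec.nat_div.comp Primrec.fst
      (hpow.comp (Primrec.const 2) Primrec.snd)) (Primrec.const 2)) (Primrec.const 1)
  exact this.of_eq fun x => by simp [Nat.testBit_eq_decide_div_mod_eq]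

end RE

/-! ### Canonical codes of finite sets -/

theorem mem_Dset {u i : ℕ} : i ∈ Dset u ↔ u.testBit i = true := Iff.rfl

theorem lt_of_mem_Dset {u i : ℕ} (h : i ∈ Dset u) : i < u :=
  lt_of_lt_of_le Nat.lt_two_pow_self (Nat.ge_two_pow_of_testBit h)

theorem Dset_zero : Dset 0 = ∅ := by
  ext i; simp [Dset]

theorem Dset_or (u v : ℕ) : Dset (u ||| v) = Dset u ∪ Dset v := by
  ext i; simp [Dset]

theorem exists_Dset {s : Set ℕ} (hs : s.Finite) : ∃ u, Dset u = s := by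
  induction s, hs using Set.Finite.induction_on with
  | empty => exact ⟨0, Dset_zero⟩
  | @insert a s _ _ ih =>
    obtain ⟨u, rfl⟩ := ih
    refine ⟨2 ^ a ||| u, ?_⟩
    rw [Dset_or]
    ext i
    have h : i ∈ Dset (2 ^ a) ↔ i = a := by
      rw [mem_Dset, Nat.testBit_two_pow, decide_eq_true_iff, eq_comm]
    simp [h]

theorem Dset_injective {u v : ℕ} (h : Dset u = Dset v) : u = v := by
  refine Nat.eq_of_testBit_eq fun i => ?_
  have : i ∈ Dset u ↔ i ∈ Dset v := by rw [h]
  exact Bool.eq_iff_iff.2 this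

theorem primrec_Dset : PrimrecPred fun x : ℕ × ℕ => x.2 ∈ Dset x.1 := primrec_testBit_s17

theorem primrec_Dset_subset : PrimrecPred fun x : ℕ × ℕ => Dset x.1 ⊆ Dset x.2 := by
  have h1 : PrimrecRel fun (i : ℕ) (x : ℕ × ℕ) => ¬ i ∈ Dset x.1 ∨ i ∈ Dset x.2 :=
    ((primrec_Dset.comp ((Primrec.fst.comp Primrec.snd).pair Primrec.fst)).not).or
      (primrec_Dset.comp ((Primrec.snd.comp Primrec.snd).pair Primrec.fst))
  refine (h1.forall_mem_list.comp (Primrec.list_range.comp Primrec.fst) Primrec.id).of_eq ?_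
  rintro ⟨u, v⟩
  simp only [List.mem_range, id]
  constructor
  · intro h i hi
    exact (h i (lt_of_mem_Dset hi)).resolve_left (not_not.2 hi)
  · intro h i _
    by_cases hi : i ∈ Dset u
    · exact Or.inr (h hi)
    · exact Or.inl hi

/-! ### Enumeration reducibility for predicates -/

/-- `P` is enumerable from positive information about `X`: the analogue of `{a | P a} ≤ₑ X` for
predicates on any `Primcodable` type, so that tuples need no hand-made coding. -/
def SigE (X : Set ℕ) {α : Type*} [Primcodable α] (P : α → Prop) : Prop :=
  ∃ R : α × ℕ → Prop, REPred R ∧ ∀ a, P a ↔ ∃ u, R (a, u) ∧ Dset u ⊆ X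

theorem enumRed_iff_s17 {A X : Set ℕ} : EnumRed A X ↔ SigE X fun n => n ∈ A := by
  constructor
  · rintro ⟨W, hW, rfl⟩
    exact ⟨fun x => Nat.pair x.1 x.2 ∈ W,
      re_comp (ce_iff_re.1 hW) (Primrec₂.natPair.comp Primrec.fst Primrec.snd).to_comp,
      fun a => Iff.rfl⟩
  · rintro ⟨R, hR, h⟩
    refine ⟨{n | R n.unpair}, ce_iff_re.2 (re_comp hR Primrec.unpair.to_comp), ?_⟩
    ext n
    simp [h, enumOp]

namespace SigE

variable {X Y : Set ℕ} {α β : Type*} [Primcodable α] [Primcodable β]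

theorem of_eq {P Q : α → Prop} (h : SigE X P) (H : ∀ a, P a ↔ Q a) : SigE X Q :=
  (funext fun a => propext (H a) : P = Q) ▸ h

theorem of_re {P : α → Prop} (h : REPred P) : SigE X P := by
  refine ⟨fun x => P x.1, re_comp h Computable.fst, fun a => ?_⟩
  exact ⟨fun h => ⟨0, h, by simp [Dset_zero]⟩, fun ⟨_, h, _⟩ => h⟩

theorem of_prim {P : α → Prop} (h : PrimrecPred P) : SigE X P :=
  of_re h.computablePred.to_re

theorem comp {P : β → Prop} (h : SigE X P) {f : α → β} (hf : Computable f) :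
    SigE X fun a => P (f a) := by
  obtain ⟨R, hR, h⟩ := h
  exact ⟨fun x => R (f x.1, x.2),
    re_comp hR ((hf.comp Computable.fst).pair Computable.snd), fun a => h _⟩

/-- The axiom relation may be taken closed upwards in the finite set of positive information. -/
theorem mono_form {P : α → Prop} (h : SigE X P) :
    ∃ R : α × ℕ → Prop, REPred R ∧ (∀ a u v, Dset u ⊆ Dset v → R (a, u) → R (a, v)) ∧
      ∀ a, P a ↔ ∃ u, R (a, u) ∧ Dset u ⊆ X := by
  obtain ⟨R, hR, h⟩ := h
  refine ⟨fun x => ∃ w, R (x.1, w) ∧ Dset w ⊆ Dset x.2, ?_, ?_, ?_⟩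
  · refine re_ex (p := fun y : (α × ℕ) × ℕ => R (y.1.1, y.2) ∧ Dset y.2 ⊆ Dset y.1.2)
      (re_and ?_ ?_)
    · exact re_comp hR ((Computable.fst.comp Computable.fst).pair Computable.snd)
    · exact (primrec_Dset_subset.comp (Primrec.snd.pair
        (Primrec.snd.comp Primrec.fst))).computablePred.to_re
  · rintro a u v huv ⟨w, hw, hs⟩
    exact ⟨w, hw, hs.trans huv⟩
  · intro a
    rw [h]
    constructor
    · rintro ⟨u, hu, hs⟩
      exact ⟨u, ⟨u, hu, Subset.rfl⟩, hs⟩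
    · rintro ⟨u, ⟨w, hw, hs⟩, hu⟩
      exact ⟨w, hw, hs.trans hu⟩

theorem and {P Q : α → Prop} (hP : SigE X P) (hQ : SigE X Q) : SigE X fun a => P a ∧ Q a := by
  obtain ⟨R, hR, hRm, hP⟩ := hP.mono_form
  obtain ⟨S, hS, hSm, hQ⟩ := hQ.mono_form
  refine ⟨fun x => R x ∧ S x, re_and hR hS, fun a => ?_⟩
  simp only [hP, hQ]
  constructor
  · rintro ⟨⟨u, hu, hu'⟩, v, hv, hv'⟩
    refine ⟨u ||| v, ⟨hRm _ _ _ ?_ hu, hSm _ _ _ ?_ hv⟩, ?_⟩ <;> rw [Dset_or]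
    · exact subset_union_left
    · exact subset_union_right
    · exact union_subset hu' hv'
  · rintro ⟨u, ⟨h1, h2⟩, h3⟩
    exact ⟨⟨u, h1, h3⟩, u, h2, h3⟩

theorem or {P Q : α → Prop} (hP : SigE X P) (hQ : SigE X Q) : SigE X fun a => P a ∨ Q a := by
  obtain ⟨R, hR, hP⟩ := hP
  obtain ⟨S, hS, hQ⟩ := hQ
  refine ⟨fun x => R x ∨ S x, re_or hR hS, fun a => ?_⟩
  simp only [hP, hQ, or_and_right, exists_or]

theorem ex {P : α × ℕ → Prop} (hP : SigE X P) : SigE X fun a => ∃ n, P (a, n) := by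
  obtain ⟨R, hR, hP⟩ := hP
  refine ⟨fun x => ∃ n, R ((x.1, n), x.2), ?_, fun a => ?_⟩
  · exact re_ex (p := fun y : (α × ℕ) × ℕ => R ((y.1.1, y.2), y.1.2)) (re_comp hR
      (((Computable.fst.comp Computable.fst).pair Computable.snd).pair
        (Computable.snd.comp Computable.fst)))
  · simp only [hP]
    constructor
    · rintro ⟨n, u, h, hu⟩
      exact ⟨u, ⟨n, h⟩, hu⟩
    · rintro ⟨u, ⟨n, h⟩, hu⟩
      exact ⟨n, u, h, hu⟩

theorem ball {P : α × ℕ → Prop} (hP : SigE X P) :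
    SigE X fun x : α × ℕ => ∀ i < x.2, P (x.1, i) := by
  obtain ⟨R, hR, hm, hP⟩ := hP.mono_form
  refine ⟨fun x => ∀ i < x.1.2, R ((x.1.1, i), x.2), ?_, ?_⟩
  · have h1 : REPred fun y : (α × ℕ) × ℕ => R ((y.1.1, y.2), y.1.2) := re_comp hR
      (((Computable.fst.comp Computable.fst).pair Computable.snd).pair
        (Computable.snd.comp Computable.fst))
    exact re_comp (re_ball h1) (((Computable.fst.comp Computable.fst).pair Computable.snd).pair
      (Computable.snd.comp Computable.fst))
  · rintro ⟨a, n⟩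
    dsimp only
    constructor
    · intro H
      induction n with
      | zero => exact ⟨0, by simp, by simp [Dset_zero]⟩
      | succ n ih =>
        obtain ⟨u, hu, hu'⟩ := ih fun i hi => H i (by omega)
        obtain ⟨v, hv, hv'⟩ := (hP _).1 (H n (by omega))
        refine ⟨u ||| v, fun i hi => ?_, by rw [Dset_or]; exact union_subset hu' hv'⟩
        rcases Nat.lt_succ_iff_lt_or_eq.1 hi with hi | rfl
        · exact hm _ _ _ (by rw [Dset_or]; exact subset_union_left) (hu i hi)
        · exact hm _ _ _ (by rw [Dset_or]; exact subset_union_right) hv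
    · rintro ⟨u, hu, hu'⟩ i hi
      exact (hP _).2 ⟨u, hu i hi, hu'⟩

theorem dset_ball {P : α × ℕ → Prop} (hP : SigE X P) :
    SigE X fun x : α × ℕ => ∀ i ∈ Dset x.2, P (x.1, i) := by
  have h1 : SigE X fun y : (α × ℕ) × ℕ => ¬ y.2 ∈ Dset y.1.2 ∨ P (y.1.1, y.2) :=
    (of_prim (primrec_Dset.comp ((Primrec.snd.comp Primrec.fst).pair Primrec.snd)).not).or
      (hP.comp ((Computable.fst.comp Computable.fst).pair Computable.snd))
  refine (h1.ball.comp (Computable.id.pair Computable.snd)).of_eq ?_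
  rintro ⟨a, u⟩
  constructor
  · intro h i hi
    exact (h i (lt_of_mem_Dset hi)).resolve_left (not_not.2 hi)
  · intro h i _
    by_cases hi : i ∈ Dset u
    · exact Or.inr (h i hi)
    · exact Or.inl hi

theorem refl (X : Set ℕ) : SigE X fun n => n ∈ X := by
  refine ⟨fun x => x.1 ∈ Dset x.2,
    (primrec_Dset.comp (Primrec.snd.pair Primrec.fst)).computablePred.to_re, fun a => ?_⟩
  constructor
  · intro h
    obtain ⟨u, hu⟩ := exists_Dset (Set.finite_singleton a)
    exact ⟨u, by simp [hu], by simpa [hu] using h⟩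
  · rintro ⟨u, h, hu⟩
    exact hu h

/-- The operator `A ↦ Φ(A)`, applied uniformly to a family `a ↦ {i | P (a, i)}`. -/
theorem enumOp_family {W : Set ℕ} (hW : CE W) {P : α × ℕ → Prop} (hP : SigE X P) :
    SigE X fun x : α × ℕ => x.2 ∈ enumOp W {i | P (x.1, i)} := by
  have h1 : SigE X fun y : (α × ℕ) × ℕ =>
      Nat.pair y.1.2 y.2 ∈ W ∧ ∀ i ∈ Dset y.2, P (y.1.1, i) :=
    (of_re (re_comp (ce_iff_re.1 hW) (Primrec₂.natPair.comp (Primrec.snd.comp Primrec.fst)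
      Primrec.snd).to_comp)).and
      (hP.dset_ball.comp ((Computable.fst.comp Computable.fst).pair Computable.snd))
  exact h1.ex

theorem trans {P : α → Prop} (hP : SigE Y P) (hY : SigE X fun n => n ∈ Y) : SigE X P := by
  obtain ⟨R, hR, hP⟩ := hP
  have h1 : SigE X fun y : α × ℕ => R y ∧ ∀ i ∈ Dset y.2, i ∈ Y :=
    (of_re hR).and ((hY.comp Computable.snd).dset_ball (α := α))
  exact h1.ex.of_eq fun a => (hP a).symm

/-- Enumeration from the empty set: only axioms with an empty condition, whose code is `0`,
apply. -/
theorem re {P : α → Prop} (h : SigE ∅ P) : REPred P := by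
  obtain ⟨R, hR, h⟩ := h
  refine (re_comp hR (Computable.id.pair (Computable.const 0))).of_eq fun a => ?_
  rw [h]
  constructor
  · intro h
    exact ⟨0, h, by simp [Dset_zero]⟩
  · rintro ⟨u, hu, hu'⟩
    have : u = 0 := Dset_injective (by rw [Dset_zero]; exact subset_empty_iff.1 hu')
    subst this
    exact hu

theorem ce_of_ce {A : Set ℕ} (h : SigE X fun n => n ∈ A) (hX : CE X) : CE A :=
  ce_iff_re.2 (h.trans (of_re (ce_iff_re.1 hX))).re

end SigE

/-! ### Joins -/

theorem mem_oplus {A C : Set ℕ} {i : ℕ} :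
    i ∈ oplus A C ↔ (i % 2 = 0 ∧ i / 2 ∈ A) ∨ (i % 2 = 1 ∧ i / 2 ∈ C) := by
  constructor
  · rintro (⟨x, hx, rfl⟩ | ⟨x, hx, rfl⟩)
    · left
      dsimp only
      exact ⟨by omega, by rwa [show 2 * x / 2 = x by omega]⟩
    · right
      dsimp only
      exact ⟨by omega, by rwa [show (2 * x + 1) / 2 = x by omega]⟩
  · rintro (⟨h, hx⟩ | ⟨h, hx⟩)
    · exact Or.inl ⟨_, hx, by dsimp only; omega⟩
    · exact Or.inr ⟨_, hx, by dsimp only; omega⟩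

theorem two_mul_mem_oplus {A C : Set ℕ} {i : ℕ} : 2 * i ∈ oplus A C ↔ i ∈ A := by
  rw [mem_oplus, show 2 * i / 2 = i by omega, show 2 * i % 2 = 0 by omega]
  simp

theorem two_mul_add_one_mem_oplus {A C : Set ℕ} {i : ℕ} : 2 * i + 1 ∈ oplus A C ↔ i ∈ C := by
  rw [mem_oplus, show (2 * i + 1) / 2 = i by omega, show (2 * i + 1) % 2 = 1 by omega]
  simp

theorem primrec_double : Primrec fun i : ℕ => 2 * i :=
  Primrec.nat_mul.comp (Primrec.const 2) Primrec.id

namespace SigE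

variable {X : Set ℕ} {α : Type*} [Primcodable α]

theorem oplus_family {P Q : α × ℕ → Prop} (hP : SigE X P) (hQ : SigE X Q) :
    SigE X fun x : α × ℕ => x.2 ∈ oplus {i | P (x.1, i)} {i | Q (x.1, i)} := by
  have hdiv : Computable fun x : α × ℕ => (x.1, x.2 / 2) := (Primrec.fst.pair
    (Primrec.nat_div.comp Primrec.snd (Primrec.const 2))).to_comp
  have hmod (c : ℕ) : PrimrecPred fun x : α × ℕ => x.2 % 2 = c :=
    Primrec.eq.comp (Primrec.nat_mod.comp Primrec.snd (Primrec.const 2)) (Primrec.const c)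
  refine (((of_prim (hmod 0)).and (hP.comp hdiv)).or
    ((of_prim (hmod 1)).and (hQ.comp hdiv))).of_eq fun x => ?_
  rw [mem_oplus]
  rfl

theorem oplus {A C : Set ℕ} (hA : SigE X fun n => n ∈ A) (hC : SigE X fun n => n ∈ C) :
    SigE X fun n => n ∈ oplus A C :=
  (oplus_family (α := Unit) (hA.comp Computable.snd) (hC.comp Computable.snd)).comp
    ((Computable.const ()).pair Computable.id)

theorem oplus_left (A C : Set ℕ) : SigE (_root_.oplus A C) fun n => n ∈ A :=
  ((refl (_root_.oplus A C)).comp primrec_double.to_comp).of_eq fun _ => two_mul_mem_oplus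

theorem oplus_right (A C : Set ℕ) : SigE (_root_.oplus A C) fun n => n ∈ C :=
  ((refl (_root_.oplus A C)).comp (Primrec.succ.comp primrec_double).to_comp).of_eq
    fun _ => two_mul_add_one_mem_oplus

end SigE

/-! ### Universal enumeration, the diagonal set and the jump -/

theorem computable_of_ce_tgraph {f : ℕ → ℕ} (h : CE (tgraph f)) : Computable f := by
  classical
  obtain ⟨S, hS, -, hf⟩ := re_normal_form (ce_iff_re.1 h)
  have h2 : PrimrecPred fun x : ℕ × ℕ => S (Nat.pair x.1 x.2.unpair.1, x.2.unpair.2) :=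
    hS.comp ((Primrec₂.natPair.comp Primrec.fst
      (Primrec.fst.comp (Primrec.unpair.comp Primrec.snd))).pair
      (Primrec.snd.comp (Primrec.unpair.comp Primrec.snd)))
  have hex : ∀ x, ∃ n : ℕ, S (Nat.pair x n.unpair.1, n.unpair.2) := by
    intro x
    obtain ⟨s, hs⟩ := (hf (Nat.pair x (f x))).1 (by simp [tgraph])
    exact ⟨Nat.pair (f x) s, by simpa using hs⟩
  have h3 := Computable.find (P := fun x n : ℕ => S (Nat.pair x n.unpair.1, n.unpair.2))
    h2.computablePred hex
  refine (Computable.fst.comp (Computable.unpair.comp h3)).of_eq fun x => ?_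
  have h4 := (hf _).2 ⟨_, Nat.find_spec (hex x)⟩
  simpa [tgraph] using h4.symm

theorem re_WeStd : REPred fun x : ℕ × ℕ => x.2 ∈ WeStd x.1 :=
  (Nat.Partrec.Code.eval_part.comp
    ((Computable.ofNat Nat.Partrec.Code).comp Computable.fst) Computable.snd).dom_re

theorem exists_WeStd {W : Set ℕ} (hW : CE W) : ∃ e, W = WeStd e := by
  obtain ⟨f, hf, rfl⟩ := hW
  obtain ⟨c, rfl⟩ := Nat.Partrec.Code.exists_code.1 (Partrec.nat_iff.1 hf)
  refine ⟨Encodable.encode c, ?_⟩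
  ext n
  simp [WeStd, PFun.Dom]

theorem sigE_Kset (X : Set ℕ) : SigE X fun n => n ∈ Kset X := by
  have h : Computable fun x : ℕ × ℕ => (x.1, Nat.pair x.1 x.2) :=
    Computable.fst.pair (Primrec₂.natPair.comp Primrec.fst Primrec.snd).to_comp
  have h2 : REPred fun x : ℕ × ℕ => Nat.pair x.1 x.2 ∈ WeStd x.1 :=
    (re_comp re_WeStd h).of_eq fun x => Iff.rfl
  refine ⟨_, h2, fun n => ?_⟩
  simp only [Kset, PhiStd, enumOp, mem_ofPred_eq]

/-- Diagonalization: an index of the operator would be in `Kset X` iff it is not. -/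
theorem not_sigE_Kset_compl (X : Set ℕ) : ¬ SigE X fun n => n ∉ Kset X := by
  intro h
  obtain ⟨W, hW, hK⟩ := (enumRed_iff_s17 (A := (Kset X)ᶜ)).2 h
  obtain ⟨e, rfl⟩ := exists_WeStd hW
  have h1 : e ∈ (Kset X)ᶜ ↔ e ∈ Kset X := by
    rw [hK]
    rfl
  exact not_iff_self h1

/-- `Je ∅` carries negative information about c.e. sets. By the s-m-n theorem the halting of a
program at `x` is uniformly a membership question about `Kset ∅`, and the odd half of `Je ∅` is the
complement of `Kset ∅`. -/
theorem sigE_Je_compl {W : Set ℕ} (hW : CE W) : SigE (Je ∅) fun n => n ∉ W := by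
  have h0 : CE {m | m.unpair.1 ∈ W} :=
    ce_iff_re.2 (re_comp (ce_iff_re.1 hW) (Computable.fst.comp Computable.unpair))
  obtain ⟨f, hf, hfW⟩ := h0
  obtain ⟨c, rfl⟩ := Nat.Partrec.Code.exists_code.1 (Partrec.nat_iff.1 hf)
  have hg : Primrec fun x : ℕ => Encodable.encode (c.curry x) :=
    Primrec.encode.comp (Nat.Partrec.Code.primrec₂_curry.comp (Primrec.const c) Primrec.id)
  have key : ∀ x, Encodable.encode (c.curry x) ∈ Kset ∅ ↔ x ∈ W := by
    intro x
    have h1 : ∀ m, (c.eval (Nat.pair x m)).Dom ↔ x ∈ W := by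
      intro m
      have : Nat.pair x m ∈ {m : ℕ | m.unpair.1 ∈ W} ↔ (c.eval (Nat.pair x m)).Dom := by
        rw [hfW]; rfl
      rw [← this]
      simp
    constructor
    · rintro ⟨u, hu, -⟩
      simpa [WeStd, h1] using hu
    · intro hx
      exact ⟨0, by simpa [WeStd, h1] using hx, by simp [Dset_zero]⟩
  have h2 := (SigE.oplus_right (Kset ∅) (Kset ∅)ᶜ).comp hg.to_comp
  exact h2.of_eq fun x => not_congr (key x)

/-! ### Left cuts in the lexicographic order -/

/-- The strict lexicographic order on sets of naturals, viewed as infinite binary sequences.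
The witness `k` need not be the first place of difference: it suffices that `Y` contains `k`, `X`
does not, and below `k` every element of `X` is in `Y`. In this form the relation is positive
in `Y`. -/
def lexLT (X Y : Set ℕ) : Prop := ∃ k, (k ∈ Y ∧ k ∉ X) ∧ ∀ j < k, j ∉ X ∨ j ∈ Y

theorem lexLT_trans {X Y Z : Set ℕ} (h1 : lexLT X Y) (h2 : lexLT Y Z) : lexLT X Z := by
  obtain ⟨k, ⟨hkY, hkX⟩, hk⟩ := h1
  obtain ⟨l, ⟨hlZ, hlY⟩, hl⟩ := h2
  rcases lt_trichotomy k l with h | rfl | h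
  · refine ⟨k, ⟨(hl k h).resolve_left (not_not.2 hkY), hkX⟩, fun j hj => ?_⟩
    have := hk j hj
    have := hl j (hj.trans h)
    tauto
  · exact absurd hkY hlY
  · refine ⟨l, ⟨hlZ, fun hlX => (hk l h).elim (fun h => h hlX) hlY⟩, fun j hj => ?_⟩
    have := hk j (hj.trans h)
    have := hl j hj
    tauto

theorem lexLT_total {X Y : Set ℕ} (h : X ≠ Y) : lexLT X Y ∨ lexLT Y X := by
  classical
  have hex : ∃ k, ¬ (k ∈ X ↔ k ∈ Y) := by
    by_contra! H
    exact h (Set.ext H)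
  have hmin : ∀ j < Nat.find hex, (j ∈ X ↔ j ∈ Y) := fun j hj => not_not.1 (Nat.find_min hex hj)
  have hk := Nat.find_spec hex
  by_cases hX : Nat.find hex ∈ X
  · right
    refine ⟨_, ⟨hX, by tauto⟩, fun j hj => ?_⟩
    have := hmin j hj
    tauto
  · left
    refine ⟨_, ⟨by tauto, hX⟩, fun j hj => ?_⟩
    have := hmin j hj
    tauto

/-- Since `lexLT` is positive in its right argument, comparing a canonical finite set with an
`X`-enumerable family is again `X`-enumerable. -/
theorem sigE_lexLT {X : Set ℕ} {α : Type*} [Primcodable α] {f : α → ℕ} (hf : Primrec f)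
    {P : α × ℕ → Prop} (hP : SigE X P) :
    SigE X fun a => lexLT (Dset (f a)) {i | P (a, i)} := by
  have hn : SigE X fun x : α × ℕ => x.2 ∉ Dset (f x.1) :=
    SigE.of_prim (primrec_Dset.comp ((hf.comp Primrec.fst).pair Primrec.snd)).not
  exact ((hP.and hn).and (hn.or hP).ball).ex

/-- The canonical codes of the finite sets lexicographically to the left of `Q`. -/
def leftCut (Q : Set ℕ) : Set ℕ := {u | lexLT (Dset u) Q}

theorem sigE_leftCut {X Q : Set ℕ} (hQ : SigE X fun n => n ∈ Q) :
    SigE X fun u => u ∈ leftCut Q :=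
  sigE_lexLT Primrec.id (hQ.comp Computable.snd)

/-- If `Q` and the complement of its left cut are enumerable from `X`, so is the complement of `Q`:
for infinite `Q`, `n ∉ Q` iff some finite set outside the cut has all its elements other than `n`
in `Q`. A finite `Q` is decidable. -/
theorem sigE_compl_of_leftCut {X Q : Set ℕ} (hQ : SigE X fun n => n ∈ Q)
    (hB : SigE X fun u => u ∉ leftCut Q) : SigE X fun n => n ∉ Q := by
  by_cases hfin : Q.Finite
  · obtain ⟨u, rfl⟩ := exists_Dset hfin
    exact SigE.of_prim (primrec_Dset.comp ((Primrec.const u).pair Primrec.id)).not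
  have h1 : SigE X fun x : ℕ × ℕ => x.2 = x.1 ∨ x.2 ∈ Q :=
    (SigE.of_prim (Primrec.eq.comp Primrec.snd Primrec.fst)).or (hQ.comp Computable.snd)
  have h2 : SigE X fun x : ℕ × ℕ => x.2 ∉ leftCut Q ∧ ∀ i ∈ Dset x.2, i = x.1 ∨ i ∈ Q :=
    (hB.comp Computable.snd).and h1.dset_ball
  refine h2.ex.of_eq fun n => ?_
  constructor
  · rintro ⟨u, hu, hi⟩ hn
    -- `n ∈ Q` would give `Dset u ⊆ Q`, and any element of the infinite `Q` beyond `u` puts `u`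
    -- into the cut.
    obtain ⟨k, hkQ, hk⟩ := (show Q.Infinite from hfin).exists_gt u
    refine hu ⟨k, ⟨hkQ, fun h => ?_⟩, fun j _ => ?_⟩
    · exact absurd (lt_of_mem_Dset h) (by omega)
    · by_cases hj : j ∈ Dset u
      · exact Or.inr ((hi j hj).elim (fun h => h ▸ hn) id)
      · exact Or.inl hj
  · intro hn
    -- the initial segment of `Q` below `n`, with `n` added, is to the right of `Q`
    obtain ⟨u, hu⟩ := exists_Dset (((Set.finite_Iio n).inter_of_left Q).insert n)
    refine ⟨u, ?_, ?_⟩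
    · rintro ⟨k, ⟨hkQ, hku⟩, hk⟩
      rw [hu] at hku hk
      have hne : k ≠ n := fun h => hn (h ▸ hkQ)
      have hlt : ¬ k < n := fun h => hku (Or.inr ⟨h, hkQ⟩)
      exact (hk n (by omega)).elim (fun h => h (Or.inl rfl)) hn
    · intro i hi
      dsimp only at hi
      rw [hu] at hi
      exact hi.imp id And.right

/-! ### Total functions below the join with a left cut -/

/-- Let `B` be the left cut of `Q`, with complement not enumerable from `X`. If `C` is enumerable
from `X`, then a total function enumerable from `B ⊕ C` is already enumerable from `C`.

For a code `u`, let `I u` be the set of codes left of `u`. The set of `u` such that `Φ(I u ⊕ C)` is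
not single-valued is enumerable from `X`. It misses `B`, since `I u ⊆ B` for `u ∈ B`. As it is not
the complement of `B`, some `u ∉ B` has `Φ(I u ⊕ C)` single-valued. Now `B ⊆ I u`, so this is a
single-valued extension of the graph `Φ(B ⊕ C)` of a total function, hence equal to it; and
`I u` is decidable. -/
theorem total_below_join {X Q C : Set ℕ} (hB : ¬ SigE X fun u => u ∉ leftCut Q)
    (hC : SigE X fun n => n ∈ C) {f : ℕ → ℕ} (hf : EnumRed (tgraph f) (oplus (leftCut Q) C)) :
    EnumRed (tgraph f) C := by
  obtain ⟨W, hW, hfW⟩ := hf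
  let I : ℕ → Set ℕ := fun u => {v | lexLT (Dset v) (Dset u)}
  have mono : ∀ {Y Z : Set ℕ}, Y ⊆ Z → enumOp W (oplus Y C) ⊆ enumOp W (oplus Z C) := by
    rintro Y Z h x ⟨v, hv, hs⟩
    refine ⟨v, hv, hs.trans fun i hi => ?_⟩
    rw [mem_oplus] at hi ⊢
    exact hi.imp (And.imp_right fun h' => h h') id
  have hI : SigE C fun x : ℕ × ℕ => x.2 ∈ I x.1 :=
    sigE_lexLT (f := fun x : ℕ × ℕ => x.2) Primrec.snd (P := fun y => y.2 ∈ Dset y.1.1)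
      (SigE.of_prim (primrec_Dset.comp
        ((Primrec.fst.comp Primrec.fst).pair Primrec.snd)))
  have hΦ : SigE C fun x : ℕ × ℕ => x.2 ∈ enumOp W (oplus (I x.1) C) :=
    SigE.enumOp_family hW (SigE.oplus_family hI ((SigE.refl C).comp Computable.snd))
  have hbad : SigE C fun u => ∃ m n, (m ∈ enumOp W (oplus (I u) C) ∧
      n ∈ enumOp W (oplus (I u) C)) ∧ m.unpair.1 = n.unpair.1 ∧ m ≠ n := by
    have hm : Primrec fun y : (ℕ × ℕ) × ℕ => y.1.2 := Primrec.snd.comp Primrec.fst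
    have hu : Computable fun y : (ℕ × ℕ) × ℕ => y.1.1 := Computable.fst.comp Computable.fst
    have h1 : SigE C fun y : (ℕ × ℕ) × ℕ => (y.1.2 ∈ enumOp W (oplus (I y.1.1) C) ∧
        y.2 ∈ enumOp W (oplus (I y.1.1) C)) ∧ y.1.2.unpair.1 = y.2.unpair.1 ∧ y.1.2 ≠ y.2 :=
      ((hΦ.comp (hu.pair hm.to_comp)).and (hΦ.comp (hu.pair Computable.snd))).and
        (SigE.of_prim ((Primrec.eq.comp (Primrec.fst.comp (Primrec.unpair.comp hm))
          (Primrec.fst.comp (Primrec.unpair.comp Primrec.snd))).and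
          (Primrec.eq.comp hm Primrec.snd).not))
    exact h1.ex.ex
  have single : ∀ {m n : ℕ}, m ∈ tgraph f → n ∈ tgraph f → m.unpair.1 = n.unpair.1 → m = n := by
    intro m n hm hn h
    have h2 : m.unpair.2 = n.unpair.2 := by
      rw [← show f m.unpair.1 = _ from hm, ← show f n.unpair.1 = _ from hn, h]
    rw [← Nat.pair_unpair m, h, h2, Nat.pair_unpair]
  obtain ⟨u, hu, hgood⟩ : ∃ u, u ∉ leftCut Q ∧ ∀ m n, m ∈ enumOp W (oplus (I u) C) →
      n ∈ enumOp W (oplus (I u) C) → m.unpair.1 = n.unpair.1 → m = n := by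
    by_contra! H
    refine hB ((hbad.trans hC).of_eq fun u => ?_)
    constructor
    · rintro ⟨m, n, ⟨hm, hn⟩, h1, h2⟩ hu
      have hsub : I u ⊆ leftCut Q := fun v hv => lexLT_trans hv hu
      have hm' := mono hsub hm
      have hn' := mono hsub hn
      rw [← hfW] at hm' hn'
      exact h2 (single hm' hn' h1)
    · intro hu
      obtain ⟨m, n, hm, hn, h1, h2⟩ := H u hu
      exact ⟨m, n, ⟨hm, hn⟩, h1, h2⟩
  have hsub : leftCut Q ⊆ I u := by
    intro v hv
    have hne : Dset v ≠ Dset u := fun h => hu (Dset_injective h ▸ hv)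
    exact (lexLT_total hne).resolve_right fun h => hu (lexLT_trans h hv)
  have hle : tgraph f ⊆ enumOp W (oplus (I u) C) := hfW ▸ mono hsub
  refine enumRed_iff_s17.2 ((hΦ.comp ((Computable.const u).pair Computable.id)).of_eq fun n => ?_)
  constructor
  · intro hn
    have h1 : Nat.pair n.unpair.1 (f n.unpair.1) ∈ tgraph f := by simp [tgraph]
    have h2 := hgood _ _ hn (hle h1) (by simp)
    rw [show n = _ from h2]
    exact h1
  · intro hn
    exact hle hn

theorem computable_of_mem_QMclass {C : Set ℕ} (hC : C ∈ QMclass) {f : ℕ → ℕ}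
    (hf : EnumRed (tgraph f) C) : Computable f := by
  rcases hC with hC | hC
  · exact computable_of_ce_tgraph ((enumRed_iff_s17.1 hf).ce_of_ce hC)
  · exact hC.1.2 f hf

theorem sigE_of_mem_QMclass {C : Set ℕ} (hC : C ∈ QMclass) : SigE (Je ∅) fun n => n ∈ C := by
  rcases hC with hC | hC
  · exact SigE.of_re (ce_iff_re.1 hC)
  · exact enumRed_iff_s17.1 hC.2

theorem ce_empty : CE ∅ :=
  ce_iff_re.2 ((PrimrecPred.computablePred
    (PrimrecPred.of_eq (Primrec.eq.comp (Primrec.const 0) (Primrec.const 1) :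
      PrimrecPred fun _ : ℕ => 0 = 1) (by simp))).to_re)

/-- The left cut of `Kset (Je ∅)` is a non-c.e. member of `QMclass` whose join with every member of `QMclass` is again in
`QMclass`. -/
theorem exists_universal_join :
    ∃ B : Set ℕ, B ∈ QMclass ∧ ¬ CE B ∧ ∀ C ∈ QMclass, oplus B C ∈ QMclass := by
  have hQ := sigE_Kset (Je ∅)
  have hBc : ¬ SigE (Je ∅) fun u => u ∉ leftCut (Kset (Je ∅)) := fun h =>
    not_sigE_Kset_compl _ (sigE_compl_of_leftCut hQ h)
  have hB := sigE_leftCut hQ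
  generalize hdef : leftCut (Kset (Je ∅)) = B at hBc hB
  have hBce : ¬ CE B := fun h => hBc (sigE_Je_compl h)
  have hjoin : ∀ C ∈ QMclass, oplus B C ∈ QMclass := by
    intro C hC
    refine Or.inr ⟨⟨fun h => hBce ((SigE.oplus_left B C).ce_of_ce h), fun f hf => ?_⟩, ?_⟩
    · subst hdef
      exact computable_of_mem_QMclass hC (total_below_join hBc (sigE_of_mem_QMclass hC) hf)
    · exact enumRed_iff_s17.2 (hB.oplus (sigE_of_mem_QMclass hC))
  refine ⟨B, Or.inr ⟨⟨hBce, fun f hf => ?_⟩, enumRed_iff_s17.2 hB⟩, hBce, hjoin⟩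
  have h0 := hjoin ∅ (Or.inl ce_empty)
  exact computable_of_mem_QMclass h0
    (enumRed_iff_s17.2 ((enumRed_iff_s17.1 hf).trans (SigE.oplus_left B ∅)))

/-- `𝒬ℳ` is not a splitting class: there are non-c.e. `B₁, B₂ ∈ 𝒬ℳ` such that
no `C ∈ 𝒬ℳ` has both `B₁ ⊕ C ∉ 𝒬ℳ` and `B₂ ⊕ C ∉ 𝒬ℳ`; in particular the
splitting condition fails for `A = ∅` and `𝓑 = {B₁, B₂}`. -/
theorem qm_not_splitting_class :
    ¬ SplittingClassE QMclass ∧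
    ∃ B1 B2 : Set ℕ, B1 ∈ QMclass ∧ B2 ∈ QMclass ∧ ¬ CE B1 ∧ ¬ CE B2 ∧
      ¬ ∃ C ∈ QMclass, oplus B1 C ∉ QMclass ∧ oplus B2 C ∉ QMclass := by
  obtain ⟨B, hB, hBce, hjoin⟩ := exists_universal_join
  refine ⟨fun ⟨_, _, hsplit⟩ => ?_, B, B, hB, hB, hBce, hBce, fun ⟨C, hC, h, _⟩ => h (hjoin C hC)⟩
  obtain ⟨C, hC, -, -, h⟩ := hsplit ∅ (Or.inl ce_empty) {B} (Set.finite_singleton B)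
    (by simpa using hB) (by
      rintro B' rfl h
      exact hBce ((enumRed_iff_s17.1 h).ce_of_ce ce_empty))
  exact h B rfl (hjoin C hC)
end
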